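/- Let X be a Banach space having no closed subspace isomorphic to c₀, and let {z_j}_{j=1}^∞ ⊆ X satisfy ‖z_j‖ = 1 for all j. Then sup_{Δ} ‖∑_{j∈Δ} z_j‖ = ∞, where the supremum is over all finite subsets Δ of ℕ. -/

import Mathlib

open scoped BigOperators ZeroAtInfty

/-!
If the finite sums of `z` are bounded but `z` is not summable, then disjoint blocks of `z` give a
sequence `w` whose finite sums are bounded and whose norms are at least some `δ > 0`. Boundedness
makes `f ↦ ∑' k, f k • w k` a bounded operator on `c₀`. Choose norming functionals `g j` of the
`w j`; the rows of the matrix `‖g j (w k)‖` have bounded sums, so by Rosenthal's disjointification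
lemma its off-diagonal row sums are at most `δ / 2` after passing to a subsequence. Evaluating `g j`
at the image of `f` then bounds `(δ / 2) * ‖f‖` by the norm of that image, so the operator is an
isomorphism of `c₀` onto a closed subspace.
-/

open Filter Function Topology

section Rosenthal

/-- The row sums of `a` away from the diagonal are at most `C`. All finite partial sums are bounded,
so that no summability has to be assumed. -/
def OffDiagRowSumLE {ι : Type*} (a : Matrix ι ι ℝ) (C : ℝ) : Prop :=
  ∀ (j : ι) (F : Finset ι), j ∉ F → ∑ k ∈ F, a j k ≤ C

variable {a : Matrix ℕ ℕ ℝ} {C ε : ℝ}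

/- Kupka's argument: split `ℕ` into the infinite sets `{pair p j | j}`. If none of them is the
range of a suitable `u`, then each contains an index `pair p (q p)` whose row has a sum exceeding
`ε` inside its own set, so along these indices at most `C - ε` is left for the other sets. -/
lemma OffDiagRowSumLE.exists_submatrix_or (ha : OffDiagRowSumLE a C) (ε : ℝ) :
    (∃ u : ℕ ↪ ℕ, OffDiagRowSumLE (a.submatrix u u) ε) ∨
      ∃ v : ℕ ↪ ℕ, OffDiagRowSumLE (a.submatrix v v) (C - ε) := by
  let row (p : ℕ) : ℕ ↪ ℕ := ⟨Nat.pair p, fun _ _ h => (Nat.pair_eq_pair.1 h).2⟩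
  by_cases h_row : ∃ p, OffDiagRowSumLE (a.submatrix (row p) (row p)) ε
  · exact .inl (h_row.imp' row fun _ => id)
  right
  simp only [OffDiagRowSumLE, not_exists, not_forall, not_le] at h_row
  choose q G hqG hG using h_row
  let v : ℕ ↪ ℕ := ⟨fun p => Nat.pair p (q p), fun _ _ h => (Nat.pair_eq_pair.1 h).1⟩
  refine ⟨v, fun j F hjF => ?_⟩
  have h_disj : Disjoint (F.map v) ((G j).map (row j)) := by
    simp only [Finset.disjoint_left, Finset.mem_map, not_exists, not_and]
    rintro _ ⟨p, hp, rfl⟩ k _ hk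
    exact hjF ((Nat.pair_eq_pair.1 hk).1 ▸ hp)
  have h_notMem : v j ∉ (F.map v).disjUnion ((G j).map (row j)) h_disj := by
    rw [Finset.mem_disjUnion, Finset.mem_map' v]
    exact not_or.2 ⟨hjF, fun h => hqG j ((Finset.mem_map' (row j)).1 h)⟩
  have h_sum := ha (v j) _ h_notMem
  rw [Finset.sum_disjUnion, Finset.sum_map, Finset.sum_map] at h_sum
  exact le_sub_iff_add_le.2 ((add_le_add_right (hG j).le _).trans h_sum)

theorem OffDiagRowSumLE.exists_submatrix (ha : OffDiagRowSumLE a C) (hε : 0 < ε) :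
    ∃ u : ℕ ↪ ℕ, OffDiagRowSumLE (a.submatrix u u) ε := by
  obtain ⟨n, hn⟩ := exists_nat_ge (C / ε)
  rw [div_le_iff₀ hε] at hn
  induction n generalizing a C with
  | zero =>
    refine ⟨.refl ℕ, fun j F hjF => (ha j F hjF).trans (hn.trans ?_)⟩
    simpa only [Nat.cast_zero, zero_mul] using hε.le
  | succ n ih =>
    obtain hu | ⟨v, hv⟩ := ha.exists_submatrix_or ε
    · exact hu
    obtain ⟨u, hu⟩ := ih hv (by push_cast at hn; linarith)
    exact ⟨u.trans v, hu⟩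

end Rosenthal

section BoundedSums

variable {ι 𝕜 X : Type*} [RCLike 𝕜] {M : ℝ}

lemma sum_abs_le_of_forall_abs_sum_le {c : ι → ℝ} (hM : ∀ F : Finset ι, |∑ i ∈ F, c i| ≤ M)
    (F : Finset ι) : ∑ i ∈ F, |c i| ≤ 2 * M := by
  have h_nonneg : ∑ i ∈ F with 0 ≤ c i, |c i| ≤ M := by
    rw [Finset.sum_congr rfl fun i hi => abs_of_nonneg (Finset.mem_filter.1 hi).2]
    exact (le_abs_self _).trans (hM _)
  have h_neg : ∑ i ∈ F with ¬ 0 ≤ c i, |c i| ≤ M := by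
    rw [Finset.sum_congr rfl fun i hi => abs_of_neg (not_le.1 (Finset.mem_filter.1 hi).2),
      Finset.sum_neg_distrib]
    exact (neg_le_abs _).trans (hM _)
  rw [← Finset.sum_filter_add_sum_filter_not F (fun i => 0 ≤ c i)]
  linarith

lemma norm_le_abs_re_add_abs_im (x : 𝕜) : ‖x‖ ≤ |RCLike.re x| + |RCLike.im x| := by
  rw [← sq_le_sq₀ (norm_nonneg x) (by positivity), RCLike.norm_sq_eq_def, add_sq, sq_abs, sq_abs]
  have : 0 ≤ |RCLike.re x| * |RCLike.im x| := by positivity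
  linarith

lemma sum_norm_le_of_forall_norm_sum_le {c : ι → 𝕜} (hM : ∀ F : Finset ι, ‖∑ i ∈ F, c i‖ ≤ M)
    (F : Finset ι) : ∑ i ∈ F, ‖c i‖ ≤ 4 * M := by
  have h_re : ∑ i ∈ F, |RCLike.re (c i)| ≤ 2 * M :=
    sum_abs_le_of_forall_abs_sum_le
      (fun G => by simpa only [map_sum] using (RCLike.abs_re_le_norm _).trans (hM G)) F
  have h_im : ∑ i ∈ F, |RCLike.im (c i)| ≤ 2 * M :=
    sum_abs_le_of_forall_abs_sum_le
      (fun G => by simpa only [map_sum] using (RCLike.abs_im_le_norm _).trans (hM G)) F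
  calc ∑ i ∈ F, ‖c i‖
      ≤ ∑ i ∈ F, (|RCLike.re (c i)| + |RCLike.im (c i)|) :=
        Finset.sum_le_sum fun i _ => norm_le_abs_re_add_abs_im (c i)
    _ = ∑ i ∈ F, |RCLike.re (c i)| + ∑ i ∈ F, |RCLike.im (c i)| := Finset.sum_add_distrib
    _ ≤ 4 * M := by linarith

variable [NormedAddCommGroup X] [NormedSpace 𝕜 X] {z : ι → X}

lemma sum_norm_dual_apply_le (hM : ∀ F : Finset ι, ‖∑ i ∈ F, z i‖ ≤ M) (g : StrongDual 𝕜 X)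
    (F : Finset ι) : ∑ i ∈ F, ‖g (z i)‖ ≤ 4 * (‖g‖ * M) :=
  sum_norm_le_of_forall_norm_sum_le
    (fun G => by simpa only [map_sum] using g.le_opNorm_of_le (hM G)) F

lemma norm_sum_smul_le_of_forall_norm_sum_le (hM : ∀ F : Finset ι, ‖∑ i ∈ F, z i‖ ≤ M)
    {F : Finset ι} {c : ι → 𝕜} {A : ℝ} (hA : 0 ≤ A) (hc : ∀ i ∈ F, ‖c i‖ ≤ A) :
    ‖∑ i ∈ F, c i • z i‖ ≤ 4 * M * A := by
  have hM_nonneg : 0 ≤ M := (norm_nonneg _).trans (hM ∅)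
  refine NormedSpace.norm_le_dual_bound 𝕜 _ (by positivity) fun g => ?_
  calc ‖g (∑ i ∈ F, c i • z i)‖
      ≤ ∑ i ∈ F, ‖c i‖ * ‖g (z i)‖ := by
        simpa only [map_sum, map_smul, norm_smul] using norm_sum_le F fun i => g (c i • z i)
    _ ≤ ∑ i ∈ F, A * ‖g (z i)‖ := by gcongr with i hi; exact hc i hi
    _ = A * ∑ i ∈ F, ‖g (z i)‖ := (Finset.mul_sum ..).symm
    _ ≤ A * (4 * (‖g‖ * M)) := by gcongr; exact sum_norm_dual_apply_le hM g F
    _ = 4 * M * A * ‖g‖ := by ring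

lemma summable_smul_of_tendsto_zero [CompleteSpace X] (hM : ∀ F : Finset ι, ‖∑ i ∈ F, z i‖ ≤ M)
    {c : ι → 𝕜} (hc : Tendsto c cofinite (𝓝 0)) : Summable fun i => c i • z i := by
  refine summable_iff_vanishing_norm.2 fun ε hε => ?_
  obtain ⟨η, hη, h_small⟩ := exists_pos_mul_lt hε (4 * M)
  have h_finite : {i | ¬ ‖c i‖ < η}.Finite :=
    eventually_cofinite.1 ((tendsto_zero_iff_norm_tendsto_zero.1 hc).eventually_lt_const hη)
  refine ⟨h_finite.toFinset, fun F hF => lt_of_le_of_lt ?_ h_small⟩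
  refine norm_sum_smul_le_of_forall_norm_sum_le hM hη.le fun i hi => ?_
  by_contra! h
  exact Finset.disjoint_left.1 hF hi (h_finite.mem_toFinset.2 h.not_gt)

lemma mul_norm_le_norm_sum_smul_add {g : StrongDual 𝕜 X} (hg : ‖g‖ ≤ 1) {F : Finset ι} {j : ι}
    (hj : j ∈ F) {c : ι → 𝕜} {A η : ℝ} (hA : 0 ≤ A) (hc : ∀ i, ‖c i‖ ≤ A)
    (hη : ∀ G : Finset ι, j ∉ G → ∑ i ∈ G, ‖g (z i)‖ ≤ η) :
    ‖g (z j)‖ * ‖c j‖ ≤ ‖∑ i ∈ F, c i • z i‖ + η * A := by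
  classical
  have h_split : g (c j • z j) = g (∑ i ∈ F, c i • z i) - ∑ i ∈ F.erase j, c i * g (z i) := by
    rw [← Finset.add_sum_erase F _ hj, map_add, map_sum]
    simp only [map_smul, smul_eq_mul, add_sub_cancel_right]
  have h_rest : ‖∑ i ∈ F.erase j, c i * g (z i)‖ ≤ η * A := by
    calc ‖∑ i ∈ F.erase j, c i * g (z i)‖
        ≤ ∑ i ∈ F.erase j, ‖g (z i)‖ * A := by
          refine norm_sum_le_of_le _ fun i _ => ?_
          rw [norm_mul, mul_comm]
          gcongr
          exact hc i
      _ = (∑ i ∈ F.erase j, ‖g (z i)‖) * A := (Finset.sum_mul ..).symm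
      _ ≤ η * A := by gcongr; exact hη _ (Finset.notMem_erase j F)
  calc ‖g (z j)‖ * ‖c j‖ = ‖g (c j • z j)‖ := by rw [map_smul, norm_smul, mul_comm]
    _ ≤ ‖g (∑ i ∈ F, c i • z i)‖ + ‖∑ i ∈ F.erase j, c i * g (z i)‖ := by
      rw [h_split]
      exact norm_sub_le _ _
    _ ≤ ‖∑ i ∈ F, c i • z i‖ + η * A :=
      add_le_add (by simpa only [one_mul] using g.le_of_opNorm_le hg _) h_rest

end BoundedSums

section ZeroAtInfty

variable {ι 𝕜 X : Type*} [TopologicalSpace ι]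

lemma norm_apply_le_norm_zeroAtInfty {E : Type*} [SeminormedAddCommGroup E] (f : C₀(ι, E))
    (i : ι) : ‖f i‖ ≤ ‖f‖ :=
  f.toBCF.norm_coe_le_norm i

variable [DiscreteTopology ι] [RCLike 𝕜] [NormedAddCommGroup X] [NormedSpace 𝕜 X]
  [CompleteSpace X] {z : ι → X} {M : ℝ}

lemma summable_zeroAtInfty_smul (hM : ∀ F : Finset ι, ‖∑ i ∈ F, z i‖ ≤ M) (f : C₀(ι, 𝕜)) :
    Summable fun i => f i • z i :=
  summable_smul_of_tendsto_zero hM (cocompact_eq_cofinite ι ▸ zero_at_infty f)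

variable (𝕜) in
/-- The bounded operator `c₀(ι) → X` sending the unit vectors to a family `z` with bounded finite
sums. -/
noncomputable def zeroAtInftySum (hM : ∀ F : Finset ι, ‖∑ i ∈ F, z i‖ ≤ M) : C₀(ι, 𝕜) →L[𝕜] X :=
  LinearMap.mkContinuous
    { toFun := fun f => ∑' i, f i • z i
      map_add' := fun f g => by
        simpa only [ZeroAtInftyContinuousMap.add_apply, add_smul] using
          (summable_zeroAtInfty_smul hM f).tsum_add (summable_zeroAtInfty_smul hM g)
      map_smul' := fun c f => by
        simpa only [ZeroAtInftyContinuousMap.smul_apply, smul_assoc, RingHom.id_apply] using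
          (summable_zeroAtInfty_smul hM f).tsum_const_smul c }
    (4 * M)
    fun f => le_of_tendsto (summable_zeroAtInfty_smul hM f).hasSum.norm <| .of_forall fun _ =>
      norm_sum_smul_le_of_forall_norm_sum_le hM (norm_nonneg f)
        fun i _ => norm_apply_le_norm_zeroAtInfty f i

lemma hasSum_zeroAtInftySum (hM : ∀ F : Finset ι, ‖∑ i ∈ F, z i‖ ≤ M) (f : C₀(ι, 𝕜)) :
    HasSum (fun i => f i • z i) (zeroAtInftySum 𝕜 hM f) :=
  (summable_zeroAtInfty_smul hM f).hasSum

lemma mul_norm_le_norm_zeroAtInftySum (hM : ∀ F : Finset ι, ‖∑ i ∈ F, z i‖ ≤ M)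
    {g : ι → StrongDual 𝕜 X} (hg : ∀ j, ‖g j‖ ≤ 1) {δ η : ℝ} (hδ : 0 < δ) (hη : 0 ≤ η)
    (hgz : ∀ j, δ ≤ ‖g j (z j)‖) (h_off : OffDiagRowSumLE (.of fun j k => ‖g j (z k)‖) η)
    (f : C₀(ι, 𝕜)) : (δ - η) * ‖f‖ ≤ ‖zeroAtInftySum 𝕜 hM f‖ := by
  have h_coord (j : ι) : δ * ‖f j‖ ≤ ‖zeroAtInftySum 𝕜 hM f‖ + η * ‖f‖ := by
    refine ge_of_tendsto ((hasSum_zeroAtInftySum hM f).norm.add_const _) ?_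
    filter_upwards [eventually_ge_atTop {j}] with F hF
    calc δ * ‖f j‖ ≤ ‖g j (z j)‖ * ‖f j‖ := by gcongr; exact hgz j
      _ ≤ _ := mul_norm_le_norm_sum_smul_add (hg j) (Finset.singleton_subset_iff.1 hF)
        (norm_nonneg f) (norm_apply_le_norm_zeroAtInfty f) (h_off j)
  have h_norm : ‖f‖ ≤ (‖zeroAtInftySum 𝕜 hM f‖ + η * ‖f‖) / δ :=
    (BoundedContinuousFunction.norm_le (f := f.toBCF) (by positivity)).2 fun j =>
      (le_div_iff₀' hδ).2 (h_coord j)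
  rw [le_div_iff₀' hδ] at h_norm
  linarith

end ZeroAtInfty

section BessagaPelczynski

variable {ι 𝕜 X : Type*} [RCLike 𝕜] [NormedAddCommGroup X] {z : ι → X} {M : ℝ}

theorem exists_isClosed_equiv_zeroAtInfty_of_le_norm [NormedSpace 𝕜 X] [CompleteSpace X]
    {w : ℕ → X} (hM : ∀ F : Finset ℕ, ‖∑ n ∈ F, w n‖ ≤ M) {δ : ℝ} (hδ : 0 < δ)
    (hw : ∀ n, δ ≤ ‖w n‖) :
    ∃ Y : Submodule 𝕜 X, IsClosed (Y : Set X) ∧ Nonempty (Y ≃L[𝕜] C₀(ℕ, 𝕜)) := by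
  choose g hg hgw using fun n => exists_dual_vector'' 𝕜 (w n)
  have hM_nonneg : 0 ≤ M := (norm_nonneg _).trans (hM ∅)
  have h_row : OffDiagRowSumLE (.of fun j k => ‖g j (w k)‖) (4 * (1 * M)) := fun j F _ =>
    (sum_norm_dual_apply_le hM (g j) F).trans (by gcongr; exact hg j)
  obtain ⟨u, hu⟩ := h_row.exists_submatrix (half_pos hδ)
  have hM_sub (F : Finset ℕ) : ‖∑ n ∈ F, w (u n)‖ ≤ M := by
    simpa only [Finset.sum_map] using hM (F.map u)
  have h_diag (n : ℕ) : δ ≤ ‖g (u n) (w (u n))‖ := by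
    simpa only [hgw, RCLike.norm_ofReal, abs_norm] using hw (u n)
  let T := zeroAtInftySum 𝕜 hM_sub
  have h_below (f : C₀(ℕ, 𝕜)) : (δ - δ / 2) * ‖f‖ ≤ ‖T f‖ :=
    mul_norm_le_norm_zeroAtInftySum hM_sub (fun n => hg (u n)) hδ (half_pos hδ).le h_diag hu f
  have hT : AntilipschitzWith (δ / 2)⁻¹.toNNReal T :=
    AddMonoidHomClass.antilipschitz_of_bound T fun f => by
      rw [Real.coe_toNNReal _ (by positivity), le_inv_mul_iff₀ (half_pos hδ)]
      simpa only [sub_half] using h_below f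
  have h_closed : IsClosed (Set.range T) := hT.isClosed_range T.uniformContinuous
  exact ⟨T.range, h_closed, ⟨(T.equivRange hT.injective h_closed).symm⟩⟩

lemma exists_pairwise_disjoint_le_norm_sum [CompleteSpace X] (hz : ¬ Summable z) :
    ∃ δ > 0, ∃ t : ℕ → Finset ι, Pairwise (Disjoint on t) ∧ ∀ n, δ ≤ ‖∑ i ∈ t n, z i‖ := by
  classical
  simp only [summable_iff_vanishing_norm, not_forall, not_exists, not_lt] at hz
  obtain ⟨δ, hδ, h_tail⟩ := hz
  obtain ⟨t, ht, h_disj⟩ := exists_seq_of_forall_finset_exists'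
    (fun t : Finset ι => δ ≤ ‖∑ i ∈ t, z i‖) Disjoint fun S _ => by
      obtain ⟨t, ht, hδt⟩ := h_tail (S.sup id)
      exact ⟨t, hδt, fun s hs => (ht.mono_right (Finset.le_sup (f := id) hs)).symm⟩
  exact ⟨δ, hδ, t, h_disj, ht⟩

/-- **Bessaga–Pełczyński theorem** -/
theorem stmt_11_general [NormedSpace 𝕜 X] [CompleteSpace X]
    (hc0 : ¬ ∃ Y : Submodule 𝕜 X, IsClosed (Y : Set X) ∧ Nonempty (Y ≃L[𝕜] C₀(ℕ, 𝕜)))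
    (hz : ¬ Summable z) (M : ℝ) : ∃ Δ : Finset ι, M < ‖∑ i ∈ Δ, z i‖ := by
  classical
  by_contra! hM
  obtain ⟨δ, hδ, t, h_disj, ht⟩ := exists_pairwise_disjoint_le_norm_sum hz
  refine hc0 (exists_isClosed_equiv_zeroAtInfty_of_le_norm (M := M) (fun F => ?_) hδ ht)
  rw [← Finset.sum_biUnion (h_disj.set_pairwise _)]
  exact hM _

end BessagaPelczynski

lemma not_summable_of_forall_norm_eq_one {ι X : Type*} [Infinite ι] [SeminormedAddCommGroup X]
    {z : ι → X} (hz : ∀ i, ‖z i‖ = 1) : ¬ Summable z := fun h => by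
  have h_lim := h.tendsto_cofinite_zero.norm
  simp only [hz, norm_zero, tendsto_const_nhds_iff, one_ne_zero] at h_lim

theorem stmt_11 {X : Type*} [NormedAddCommGroup X] [NormedSpace ℝ X] [CompleteSpace X]
    -- no closed subspace of `X` is isomorphic to `c₀`
    (hc0 : ¬ ∃ Y : Submodule ℝ X, IsClosed (Y : Set X) ∧ Nonempty (Y ≃L[ℝ] C₀(ℕ, ℝ)))
    (z : ℕ → X) (hz : ∀ j, ‖z j‖ = 1) :
    -- `sup_Δ ‖∑_{j ∈ Δ} z_j‖ = ∞`
    ∀ M : ℝ, ∃ Δ : Finset ℕ, M < ‖∑ j ∈ Δ, z j‖ :=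
  stmt_11_general hc0 (not_summable_of_forall_norm_eq_one hz)
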